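/- Let $k$ be a field, $A \in M_n(k)$, and suppose $f_1 \mid f_2 \mid \cdots \mid f_m$ are nonzero monic polynomials in $k[x]$ such that $V_A$ is isomorphic as a $k[x]$-module to $\bigoplus_{i=1}^m k[x]/f_i k[x]$. Then $\dim_k C_{M_n(k)}(A) = \sum_{i=1}^m \sum_{j=1}^m \min(\deg f_i, \deg f_j)$. -/

import Mathlib

open Polynomial Matrix

/-- The centralizer `C_{Mₙ(k)}(A) = {B : B * A = A * B}`, as a `k`-subspace of `Mₙ(k)`. -/
def matrixCentralizer {k : Type*} [Field k] {n : ℕ} (A : Matrix (Fin n) (Fin n) k) :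
    Submodule k (Matrix (Fin n) (Fin n) k) where
  carrier := {B : Matrix (Fin n) (Fin n) k | B * A = A * B}
  add_mem' hB hC := by simp only [Set.mem_setOf_eq] at *; rw [add_mul, mul_add, hB, hC]
  zero_mem' := by simp
  smul_mem' c B hB := by
    simp only [Set.mem_setOf_eq] at *
    rw [Matrix.smul_mul, Matrix.mul_smul, hB]

lemma aux_finrank_hom {k : Type*} [Field k] (f g : k[X]) (hf : f ≠ 0) (hg : g ≠ 0)
    (h : f ∣ g ∨ g ∣ f) :
    Module.finrank k ((k[X] ⧸ Ideal.span {f}) →ₗ[k[X]] (k[X] ⧸ Ideal.span {g})) =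
      min f.natDegree g.natDegree := by
  have hfin : Module.Finite k (k[X] ⧸ Ideal.span {g}) :=
    (AdjoinRoot.powerBasis hg).finite
  let E : ((k[X] ⧸ Ideal.span {f}) →ₗ[k[X]] (k[X] ⧸ Ideal.span {g})) →ₗ[k]
      (k[X] ⧸ Ideal.span {g}) :=
    { toFun := fun φ => φ (Submodule.Quotient.mk 1)
      map_add' := fun _ _ => rfl
      map_smul' := fun _ _ => rfl }
  let L : (k[X] ⧸ Ideal.span {g}) →ₗ[k[X]] (k[X] ⧸ Ideal.span {g}) :=
    LinearMap.lsmul k[X] _ f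
  have hE : Function.Injective E := by
    intro φ ψ h
    apply Submodule.linearMap_qext
    apply LinearMap.ext_ring
    exact h
  have hr : LinearMap.range E = LinearMap.ker (L.restrictScalars k) := by
    ext x
    simp only [LinearMap.mem_range, LinearMap.mem_ker]
    constructor
    · rintro ⟨φ, rfl⟩
      change f • φ (Submodule.Quotient.mk 1) = 0
      rw [← map_smul, ← Submodule.Quotient.mk_smul]
      have : (Submodule.Quotient.mk (f • (1 : k[X])) : k[X] ⧸ Ideal.span {f}) = 0 := by
        rw [Submodule.Quotient.mk_eq_zero]
        simp [Ideal.mem_span_singleton]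
      rw [this, map_zero]
    · intro hx
      have hx' : f • x = 0 := hx
      refine ⟨Submodule.liftQ _ (LinearMap.toSpanSingleton k[X] _ x) ?_, ?_⟩
      · rw [Ideal.span, Submodule.span_le]
        simpa using hx'
      · exact one_smul k[X] x
  rw [← LinearMap.finrank_range_of_inj hE, hr]
  rcases h with h | h
  · rw [min_eq_left (natDegree_le_of_dvd h hg)]
    have h1 := LinearMap.finrank_range_add_finrank_ker (L.restrictScalars k)
    have hle : Ideal.span {g} ≤ Ideal.span {f} := Ideal.span_singleton_le_span_singleton.mpr h
    let Q : (k[X] ⧸ Ideal.span {g}) →ₗ[k[X]] (k[X] ⧸ Ideal.span {f}) := Submodule.factor hle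
    have hQ : LinearMap.ker (Q.restrictScalars k) = LinearMap.range (L.restrictScalars k) := by
      ext x
      obtain ⟨p, rfl⟩ := Submodule.Quotient.mk_surjective _ x
      simp only [LinearMap.mem_range, LinearMap.mem_ker]
      change (Submodule.Quotient.mk p : k[X] ⧸ Ideal.span {f}) = 0 ↔ 
        ∃ y : k[X] ⧸ Ideal.span {g}, f • y = _
      rw [Submodule.Quotient.mk_eq_zero, Ideal.mem_span_singleton]
      constructor
      · rintro ⟨q, rfl⟩
        exact ⟨Submodule.Quotient.mk q, rfl⟩
      · rintro ⟨y, hy⟩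
        obtain ⟨q, rfl⟩ := Submodule.Quotient.mk_surjective _ y
        rw [← Submodule.Quotient.mk_smul, Submodule.Quotient.eq, Ideal.mem_span_singleton] at hy
        have := (dvd_sub_right (Dvd.intro q rfl : f ∣ f • q)).mp (h.trans hy)
        exact this
    have h2 := LinearMap.finrank_range_add_finrank_ker (Q.restrictScalars k)
    have h3 : LinearMap.range (Q.restrictScalars k) = ⊤ := by
      rw [LinearMap.range_eq_top]
      exact Submodule.factor_surjective hle
    rw [hQ, h3, finrank_top, finrank_quotient_span_eq_natDegree] at h2
    omega
  · rw [min_eq_right (natDegree_le_of_dvd h hf)]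
    have : L.restrictScalars k = 0 := by
      refine LinearMap.ext fun x => ?_
      obtain ⟨p, rfl⟩ := Submodule.Quotient.mk_surjective _ x
      change f • (Submodule.Quotient.mk p : k[X] ⧸ Ideal.span {g}) = 0
      rw [← Submodule.Quotient.mk_smul, Submodule.Quotient.mk_eq_zero, Ideal.mem_span_singleton]
      exact h.mul_right p
    rw [this, LinearMap.ker_zero, finrank_top, finrank_quotient_span_eq_natDegree]

lemma aux_finrank_centralizer {k : Type*} [Field k] {n : ℕ} (A : Matrix (Fin n) (Fin n) k) :
    Module.finrank k (matrixCentralizer A) =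
      Module.finrank k (Module.AEval' (Matrix.toLin' A) →ₗ[k[X]]
        Module.AEval' (Matrix.toLin' A)) := by
  let o := Module.AEval'.of (Matrix.toLin' A)
  let T : (Module.AEval' (Matrix.toLin' A) →ₗ[k[X]] Module.AEval' (Matrix.toLin' A)) →ₗ[k]
      Matrix (Fin n) (Fin n) k :=
    { toFun := fun φ => LinearMap.toMatrix' (o.symm.toLinearMap ∘ₗ φ.restrictScalars k ∘ₗ
        o.toLinearMap)
      map_add' := fun φ ψ => by
        rw [← map_add]; congr 1
      map_smul' := fun c φ => by
        rw [RingHom.id_apply, ← map_smul]; congr 1 }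
  have hTa : ∀ φ, Matrix.toLin' (T φ) = o.symm.toLinearMap ∘ₗ φ.restrictScalars k ∘ₗ
      o.toLinearMap := fun φ => Matrix.toLin'_toMatrix' (o.symm.toLinearMap ∘ₗ
        φ.restrictScalars k ∘ₗ o.toLinearMap)
  have hT : Function.Injective T := by
    intro φ ψ h
    have h' := congrArg Matrix.toLin' h
    rw [hTa, hTa] at h'
    refine LinearMap.ext fun x => ?_
    exact o.symm.injective (LinearMap.congr_fun h' (o.symm x))
  have hr : LinearMap.range T = matrixCentralizer A := by
    ext B
    rw [LinearMap.mem_range]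
    change _ ↔ B * A = A * B
    constructor
    · rintro ⟨φ, rfl⟩
      apply Matrix.toLin'.injective
      rw [Matrix.toLin'_mul, Matrix.toLin'_mul, hTa]
      refine LinearMap.ext fun v => ?_
      change o.symm (φ (o (Matrix.toLin' A v))) = Matrix.toLin' A (o.symm (φ (o v)))
      rw [← Module.AEval'.X_smul_of, map_smul, Module.AEval'.of_symm_X_smul]
    · intro h
      refine ⟨LinearMap.ofAEval _ (o.toLinearMap ∘ₗ Matrix.toLin' B) ?_, ?_⟩
      · intro v
        change o (Matrix.toLin' B (Matrix.toLin' A v)) = (X : k[X]) • o (Matrix.toLin' B v)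
        rw [Module.AEval'.X_smul_of, ← Matrix.toLin'_mul_apply, h, Matrix.toLin'_mul_apply]
      · apply Matrix.toLin'.injective
        rw [hTa]
        refine LinearMap.ext fun v => ?_
        rfl
  rw [← LinearMap.finrank_range_of_inj hT, hr]

/-- If `f 0 ∣ f 1 ∣ ⋯ ∣ f (m-1)` are nonzero monic polynomials with
`V_A ≅ ⨁ᵢ k[x]/fᵢ k[x]`, then
`dim_k C_{Mₙ(k)}(A) = ∑ᵢ ∑ⱼ min (deg fᵢ) (deg fⱼ)`. -/
theorem finrank_centralizer_eq_sum_min_deg {k : Type*} [Field k] {n m : ℕ}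
    (A : Matrix (Fin n) (Fin n) k) (f : Fin m → k[X])
    (hmonic : ∀ i, (f i).Monic) (hne : ∀ i, f i ≠ 0)
    (hdvd : ∀ i j : Fin m, i ≤ j → f i ∣ f j)
    (hiso : Nonempty (Module.AEval' (Matrix.toLin' A) ≃ₗ[k[X]]
      (∀ i : Fin m, k[X] ⧸ Ideal.span {f i}))) :
    Module.finrank k (matrixCentralizer A) =
      ∑ i : Fin m, ∑ j : Fin m, min (f i).natDegree (f j).natDegree := by
  obtain ⟨e⟩ := hiso
  rw [aux_finrank_centralizer]
  have hfin : ∀ i, Module.Finite k (k[X] ⧸ Ideal.span {f i}) := fun i =>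
    (AdjoinRoot.powerBasis (hne i)).finite
  let e1 := (e.conj).restrictScalars k
  let e2 := (LinearMap.lsum k[X] (fun i => k[X] ⧸ Ideal.span {f i}) k
    (M := ∀ i : Fin m, k[X] ⧸ Ideal.span {f i})).symm
  let e3 := LinearEquiv.piCongrRight (R := k) fun i : Fin m =>
    (LinearEquiv.mk (LinearMap.mk ⟨fun φ j => LinearMap.proj j ∘ₗ φ, fun _ _ => rfl⟩
      (fun _ _ => rfl)) (fun φ => LinearMap.pi φ) (fun _ => rfl) (fun _ => rfl) :
    ((k[X] ⧸ Ideal.span {f i}) →ₗ[k[X]] (∀ j : Fin m, k[X] ⧸ Ideal.span {f j})) ≃ₗ[k]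
      ∀ j : Fin m, ((k[X] ⧸ Ideal.span {f i}) →ₗ[k[X]] (k[X] ⧸ Ideal.span {f j})))
  have hfin2 : ∀ i j, Module.Finite k
      ((k[X] ⧸ Ideal.span {f i}) →ₗ[k[X]] (k[X] ⧸ Ideal.span {f j})) := fun i j =>
    Module.Finite.of_injective (LinearMap.restrictScalarsₗ k k[X] _ _ k)
      (LinearMap.restrictScalars_injective k)
  have hfree1 : ∀ i j, Module.Free k
      ((k[X] ⧸ Ideal.span {f i}) →ₗ[k[X]] (k[X] ⧸ Ideal.span {f j})) := fun i j =>
    Module.Free.of_divisionRing k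
      ((k[X] ⧸ Ideal.span {f i}) →ₗ[k[X]] (k[X] ⧸ Ideal.span {f j}))
  have hfree : ∀ i, Module.Free k (∀ j,
      ((k[X] ⧸ Ideal.span {f i}) →ₗ[k[X]] (k[X] ⧸ Ideal.span {f j}))) := fun i =>
    Module.Free.pi k _
  rw [(e1.trans (e2.trans e3)).finrank_eq, Module.finrank_pi_fintype]
  refine Finset.sum_congr rfl fun i _ => ?_
  rw [Module.finrank_pi_fintype]
  refine Finset.sum_congr rfl fun j _ => ?_
  exact aux_finrank_hom _ _ (hne i) (hne j) ((le_total i j).imp (hdvd i j) (hdvd j i))
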